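/- arXiv:1704.04472 — 2 statements merged into one kernel-verified Lean document; each statement's English description precedes it below -/
import Mathlib

section
/- Let S ∈ Σⁿ, let d ≥ 1 with n > 6d, and let 1 ≤ i ≤ d and n−d+1 ≤ j ≤ n. Suppose that the concatenation S[i,3d]·S[n−3d+1,j] is unbordered and that per(S[d+1,n−d]) ≥ n − 3d. Then the factor S[i,j] of S is unbordered. -/
/-!
A proper border of length `ℓ` of `S[i,j]` makes `|S[i,j]| - ℓ` a period of `S[i,j]`, hence of each
factor `M` of `S[i,j]`, so that `ℓ ≤ |S[i,j]| - per(M)`. If this bound is at most the lengths of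
`S[i,a]` and `S[b,j]`, the border is a prefix of the former and a suffix of the latter, hence also a
proper border of their concatenation.
-/

open Finset

/-- `S` has a border of length `ℓ`: `1 ≤ ℓ ≤ |S|` and the length-`ℓ` prefix of `S`
equals its length-`ℓ` suffix. -/
def HasBorder {α : Type*} (S : List α) (ℓ : ℕ) : Prop :=
  1 ≤ ℓ ∧ ℓ ≤ S.length ∧ S.take ℓ = S.drop (S.length - ℓ)

/-- A string is unbordered if it has no proper border (no border of length `< |S|`). -/
def Unbordered {α : Type*} (S : List α) : Prop :=
  ∀ ℓ, ℓ < S.length → ¬ HasBorder S ℓ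

/-- `maxUnb S` is `L(S)`: the maximum length of (nonempty) unbordered factors of `S`. -/
noncomputable def maxUnb {α : Type*} (S : List α) : ℕ :=
  sSup {k | ∃ T, T ≠ [] ∧ T <:+: S ∧ Unbordered T ∧ T.length = k}

/-- `p > 0` is a period of `T` if `T[i] = T[i+p]` whenever both indices are valid. -/
def IsPeriod {α : Type*} (T : List α) (p : ℕ) : Prop :=
  0 < p ∧ ∀ (i : ℕ) (h : i + p < T.length),
    T[i]'(Nat.lt_of_le_of_lt (Nat.le_add_right i p) h) = T[i + p]'h

/-- `per T` is the shortest period of `T`. -/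
noncomputable def per {α : Type*} (T : List α) : ℕ := sInf {p | IsPeriod T p}

/-- `borderF S` is `F(S)`: the length of the shortest border of `S`. -/
noncomputable def borderF {α : Type*} (S : List α) : ℕ := sInf {ℓ | HasBorder S ℓ}

/-- `substr S i j` is the factor `S[i,j]` in 1-based closed-interval indexing. -/
def substr {α : Type*} (S : List α) (i j : ℕ) : List α := (S.drop (i - 1)).take (j + 1 - i)

section

variable {α : Type*} {S T M A B U : List α} {ℓ p i j a b c e : ℕ}

lemma hasBorder_iff_exists_prefix_suffix :
    HasBorder T ℓ ↔ ∃ U ≠ [], U.length = ℓ ∧ U <+: T ∧ U <:+ T := by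
  constructor
  · rintro ⟨hpos, hle, heq⟩
    have hlen : (T.take ℓ).length = ℓ := List.length_take_of_le hle
    exact ⟨T.take ℓ, List.ne_nil_of_length_pos (hpos.trans_eq hlen.symm), hlen,
      List.take_prefix ℓ T, heq ▸ List.drop_suffix _ T⟩
  · rintro ⟨U, hne, rfl, hpre, hsuf⟩
    exact ⟨List.length_pos_of_ne_nil hne, hpre.length_le,
      (List.prefix_iff_eq_take.1 hpre).symm.trans (List.suffix_iff_eq_drop.1 hsuf)⟩

lemma hasBorder_append (hne : U ≠ []) (hA : U <+: A) (hB : U <:+ B) :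
    HasBorder (A ++ B) U.length :=
  hasBorder_iff_exists_prefix_suffix.2
    ⟨U, hne, rfl, hA.trans (List.prefix_append A B), hB.trans (List.suffix_append A B)⟩

lemma HasBorder.isPeriod (h : HasBorder T ℓ) (hℓ : ℓ < T.length) :
    IsPeriod T (T.length - ℓ) := by
  obtain ⟨-, -, heq⟩ := h
  refine ⟨Nat.sub_pos_of_lt hℓ, fun k hk => Option.some_injective _ ?_⟩
  have hkℓ : k < ℓ := by omega
  calc some T[k] = (T.take ℓ)[k]? := by
        rw [List.getElem?_take_of_lt hkℓ, List.getElem?_eq_getElem]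
    _ = T[k + (T.length - ℓ)]? := by rw [heq, List.getElem?_drop, Nat.add_comm]
    _ = some T[k + (T.length - ℓ)] := List.getElem?_eq_getElem hk

lemma IsPeriod.of_infix (h : IsPeriod T p) (hM : M <:+: T) : IsPeriod M p := by
  obtain ⟨m, hm, hletter⟩ := List.infix_iff_getElem?.1 hM
  refine ⟨h.1, fun k hk => Option.some_injective _ ?_⟩
  have hkm : k + m + p < T.length := by omega
  have hshift : T[k + m]? = T[k + m + p]? := by
    rw [List.getElem?_eq_getElem (by omega), List.getElem?_eq_getElem hkm, h.2 (k + m) hkm]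
  calc some M[k] = T[k + m]? := (hletter k _).symm
    _ = T[k + p + m]? := by rw [hshift, Nat.add_right_comm]
    _ = some M[k + p] := hletter (k + p) hk

lemma IsPeriod.per_le (h : IsPeriod T p) : per T ≤ p :=
  Nat.sInf_le h

lemma HasBorder.add_per_le_length (h : HasBorder T ℓ) (hℓ : ℓ < T.length) (hM : M <:+: T) :
    ℓ + per M ≤ T.length := by
  have hper : per M ≤ T.length - ℓ := ((h.isPeriod hℓ).of_infix hM).per_le
  omega

lemma length_substr : (substr S i j).length = min (j + 1 - i) (S.length - (i - 1)) := by
  simp only [substr, List.length_take, List.length_drop]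

lemma substr_prefix_substr (hej : e ≤ j) : substr S i e <+: substr S i j :=
  List.take_prefix_take_left (by omega)

lemma substr_suffix_substr (hi : 1 ≤ i) (hic : i ≤ c) : substr S c j <:+ substr S i j := by
  have hdrop : substr S c j = (substr S i j).drop (c - i) := by
    rw [substr, substr, List.drop_take, List.drop_drop, show i - 1 + (c - i) = c - 1 by omega,
      show j + 1 - i - (c - i) = j + 1 - c by omega]
  exact hdrop ▸ List.drop_suffix _ _

lemma substr_infix_substr (hi : 1 ≤ i) (hic : i ≤ c) (hej : e ≤ j) :
    substr S c e <:+: substr S i j :=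
  (substr_suffix_substr hi hic).isInfix.trans (substr_prefix_substr hej).isInfix

/-- `ha` and `hbi` rearrange `(j + 1 - i) - per(S[c,e]) ≤ a + 1 - i` and
`(j + 1 - i) - per(S[c,e]) ≤ j + 1 - b`: a proper border of `S[i,j]` fits into `S[i,a]` and into
`S[b,j]`. -/
theorem factor_unbordered_of_glued_unbordered_general (hi : 1 ≤ i) (hb : 1 ≤ b)
    (hic : i ≤ c) (hej : e ≤ j)
    (ha : j ≤ a + per (substr S c e)) (hbi : b ≤ i + per (substr S c e))
    (h : Unbordered (substr S i a ++ substr S b j)) :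
    Unbordered (substr S i j) := by
  intro ℓ hℓ hborder
  have hper : ℓ + per (substr S c e) ≤ (substr S i j).length :=
    hborder.add_per_le_length hℓ (substr_infix_substr hi hic hej)
  obtain ⟨U, hne, rfl, hpre, hsuf⟩ := hasBorder_iff_exists_prefix_suffix.1 hborder
  have hpos : 0 < U.length := List.length_pos_of_ne_nil hne
  have hlenA : U.length ≤ (substr S i a).length := by
    rw [length_substr] at hper ⊢
    omega
  have hlenB : U.length ≤ (substr S b j).length := by
    rw [length_substr] at hper ⊢
    omega
  have hA : U <+: substr S i a :=
    List.prefix_of_prefix_length_le (hpre.trans (substr_prefix_substr (le_max_right a j)))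
      (substr_prefix_substr (le_max_left a j)) hlenA
  have hB : U <:+ substr S b j :=
    List.suffix_of_suffix_length_le (hsuf.trans (substr_suffix_substr le_rfl hi))
      (substr_suffix_substr le_rfl hb) hlenB
  exact h U.length (by rw [List.length_append]; omega) (hasBorder_append hne hA hB)

end

/-- let `S ∈ Σⁿ`, `d ≥ 1`, `n > 6d`, `1 ≤ i ≤ d` and `n-d+1 ≤ j ≤ n`. If the
concatenation `S[i,3d]·S[n-3d+1,j]` is unbordered and `per(S[d+1,n-d]) ≥ n - 3d`, then the factor
`S[i,j]` is unbordered. -/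
theorem factor_unbordered_of_glued_unbordered {α : Type*} (n d i j : ℕ) (S : List α)
    (hlen : S.length = n) (hd : 1 ≤ d) (hn : 6 * d < n)
    (hi1 : 1 ≤ i) (hi2 : i ≤ d) (hj1 : n - d + 1 ≤ j) (hj2 : j ≤ n)
    (h1 : Unbordered (substr S i (3 * d) ++ substr S (n - 3 * d + 1) j))
    (h2 : n - 3 * d ≤ per (substr S (d + 1) (n - d))) :
    Unbordered (substr S i j) :=
  factor_unbordered_of_glued_unbordered_general (c := d + 1) (e := n - d)
    hi1 (by omega) (by omega) (by omega) (by omega) (by omega) h1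
end

section
/- There exists an absolute constant c > 0 such that for every alphabet Σ of size σ ≥ 2 and every n ∈ ℕ, if S ∈ Σⁿ is chosen uniformly at random, then E[n − per(S)] ≤ c/σ; moreover, for every real δ with 0 < δ ≤ 1, with probability at least 1 − δ one has n − per(S) ≤ c·(1 + log_σ(1/δ)). -/
/-!
A string with period `p` is determined by its first `p` symbols, so at most
`1 + σ + ⋯ + σ ^ m ≤ 2 * σ ^ m` strings of length `n ≥ m` satisfy `per S ≤ m`. Thus
`ℙ(n - per S ≥ j) ≤ 2 * σ ^ (-j)` for `j ≥ 1`. Summing over `j` bounds the expectation by `4 / σ`,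
and this probability is at most `δ` as soon as `j ≥ 1 + log_σ (1 / δ)`, because `2 ≤ σ`.
-/

open Finset

section Periods

variable {α : Type*}

theorem isPeriod_per (T : List α) : IsPeriod T (per T) :=
  Nat.sInf_mem (s := {p | IsPeriod T p}) ⟨T.length + 1, by omega, fun i h => by omega⟩

theorem IsPeriod.eq_of_take_eq {S T : List α} {p : ℕ} (hS : IsPeriod S p) (hT : IsPeriod T p)
    (hlen : S.length = T.length) (htake : S.take p = T.take p) : S = T := by
  refine List.ext_getElem hlen fun i => ?_
  induction i using Nat.strong_induction_on with
  | _ i ih =>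
    intro hiS hiT
    by_cases hip : i < p
    · have hget : (S.take p)[i]? = (T.take p)[i]? := by rw [htake]
      simpa [List.getElem?_take, hip, hiS, hiT] using hget
    · obtain ⟨j, rfl⟩ := Nat.exists_eq_add_of_le' (not_lt.1 hip)
      rw [← hS.2 j hiS, ← hT.2 j hiT]
      exact ih j (Nat.lt_add_of_pos_right hS.1) _ _

theorem IsPeriod.injOn_take {n p : ℕ} (hp : p ≤ n) :
    Set.InjOn (Fin.take p hp) {S : Fin n → α | IsPeriod (List.ofFn S) p} :=
  fun S hS T hT hST => List.ofFn_injective <| hS.eq_of_take_eq hT (by simp) <| by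
    rw [← Fin.ofFn_take_eq_take_ofFn hp, ← Fin.ofFn_take_eq_take_ofFn hp, hST]

end Periods

theorem sum_range_succ_pow_le {σ : ℕ} (hσ : 2 ≤ σ) (m : ℕ) :
    ∑ p ∈ range (m + 1), σ ^ p ≤ 2 * σ ^ m := by
  have hlt : ∑ p ∈ range m, σ ^ p < σ ^ m := Nat.geomSum_lt hσ fun _ => mem_range.1
  rw [sum_range_succ]
  omega

section Counting

variable {Γ : Type*} [Fintype Γ]

open Classical in
theorem card_isPeriod_le {n p : ℕ} (hp : p ≤ n) :
    #{S : Fin n → Γ | IsPeriod (List.ofFn S) p} ≤ Fintype.card Γ ^ p := by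
  calc #{S : Fin n → Γ | IsPeriod (List.ofFn S) p}
      ≤ #(univ : Finset (Fin p → Γ)) :=
        card_le_card_of_injOn (Fin.take p hp) (fun _ _ => mem_univ _)
          (by simpa using IsPeriod.injOn_take hp)
    _ = Fintype.card Γ ^ p := by simp

theorem card_per_le (hΓ : 2 ≤ Fintype.card Γ) {m n : ℕ} (hm : m ≤ n) :
    #{S : Fin n → Γ | per (List.ofFn S) ≤ m} ≤ 2 * Fintype.card Γ ^ m := by
  classical
  have hcover : ({S | per (List.ofFn S) ≤ m} : Finset (Fin n → Γ)) ⊆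
      (range (m + 1)).biUnion fun p => {S | IsPeriod (List.ofFn S) p} := by
    intro S hS
    rw [mem_filter_univ] at hS
    exact mem_biUnion.2 ⟨per (List.ofFn S), mem_range_succ_iff.2 hS,
      (mem_filter_univ _).2 (isPeriod_per _)⟩
  calc #{S : Fin n → Γ | per (List.ofFn S) ≤ m}
      ≤ ∑ p ∈ range (m + 1), #{S : Fin n → Γ | IsPeriod (List.ofFn S) p} :=
        (card_le_card hcover).trans card_biUnion_le
    _ ≤ ∑ p ∈ range (m + 1), Fintype.card Γ ^ p :=
        sum_le_sum fun p hp => card_isPeriod_le ((mem_range_succ_iff.1 hp).trans hm)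
    _ ≤ 2 * Fintype.card Γ ^ m := sum_range_succ_pow_le hΓ m

theorem sum_sub_per_eq_sum_card (n : ℕ) :
    ∑ S : Fin n → Γ, (n - per (List.ofFn S)) =
      ∑ m ∈ range n, #{S : Fin n → Γ | per (List.ofFn S) ≤ m} := by
  have hcount (q : ℕ) : n - q = #{m ∈ range n | q ≤ m} := by
    rw [← Nat.card_Ico]
    congr 1
    ext m
    simp [and_comm]
  simp only [hcount, card_filter]
  exact sum_comm

theorem card_mul_sum_sub_per_le (hΓ : 2 ≤ Fintype.card Γ) (n : ℕ) :
    Fintype.card Γ * ∑ S : Fin n → Γ, (n - per (List.ofFn S)) ≤ 4 * Fintype.card Γ ^ n := by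
  rw [sum_sub_per_eq_sum_card]
  cases n with
  | zero => simp
  | succ n =>
    calc Fintype.card Γ * ∑ m ∈ range (n + 1), #{S : Fin (n + 1) → Γ | per (List.ofFn S) ≤ m}
        ≤ Fintype.card Γ * ∑ m ∈ range (n + 1), 2 * Fintype.card Γ ^ m := by
          gcongr with m hm
          exact card_per_le hΓ (mem_range.1 hm).le
      _ ≤ Fintype.card Γ * (2 * (2 * Fintype.card Γ ^ n)) := by
          rw [← mul_sum]
          gcongr
          exact sum_range_succ_pow_le hΓ n
      _ = 4 * Fintype.card Γ ^ (n + 1) := by ring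

theorem card_lt_sub_per_mul_pow_le (hΓ : 2 ≤ Fintype.card Γ) (n k : ℕ) :
    #{S : Fin n → Γ | k < n - per (List.ofFn S)} * Fintype.card Γ ^ (k + 1) ≤
      2 * Fintype.card Γ ^ n := by
  obtain hn | hk := le_or_gt n k
  · rw [filter_false_of_mem fun S _ => by omega]
    simp
  · obtain ⟨m, rfl⟩ := Nat.exists_eq_add_of_le' (Nat.succ_le_of_lt hk)
    have hiff (q : ℕ) : k < m + (k + 1) - q ↔ q ≤ m := by omega
    simp only [Nat.succ_eq_add_one, hiff]
    rw [pow_add _ m, ← mul_assoc]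
    gcongr
    exact card_per_le hΓ (Nat.le_add_right _ _)

theorem card_lt_sub_per_mul_rpow_le (hΓ : 2 ≤ Fintype.card Γ) (n : ℕ) {x : ℝ} (hx : 0 ≤ x) :
    #{S : Fin n → Γ | x < (n - per (List.ofFn S) : ℕ)} * (Fintype.card Γ : ℝ) ^ x ≤
      2 * (Fintype.card Γ : ℝ) ^ n := by
  have hone : (1 : ℝ) ≤ Fintype.card Γ := by exact_mod_cast one_le_two.trans hΓ
  have hpow : (Fintype.card Γ : ℝ) ^ x ≤ (Fintype.card Γ : ℝ) ^ (⌊x⌋₊ + 1) := by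
    rw [← Real.rpow_natCast]
    exact Real.rpow_le_rpow_of_exponent_le hone (by exact_mod_cast (Nat.lt_floor_add_one x).le)
  simp only [← Nat.floor_lt hx]
  calc (#{S : Fin n → Γ | ⌊x⌋₊ < n - per (List.ofFn S)} : ℝ) * (Fintype.card Γ : ℝ) ^ x
      ≤ #{S : Fin n → Γ | ⌊x⌋₊ < n - per (List.ofFn S)} *
          (Fintype.card Γ : ℝ) ^ (⌊x⌋₊ + 1) := by gcongr
    _ ≤ 2 * (Fintype.card Γ : ℝ) ^ n := by exact_mod_cast card_lt_sub_per_mul_pow_le hΓ n ⌊x⌋₊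

theorem one_sub_le_card_sub_per_le_div (hΓ : 2 ≤ Fintype.card Γ) (n : ℕ) {x δ : ℝ} (hx : 0 ≤ x)
    (hδ : 0 < δ) (hxδ : 2 / δ ≤ (Fintype.card Γ : ℝ) ^ x) :
    1 - δ ≤ #{S : Fin n → Γ | ((n - per (List.ofFn S) : ℕ) : ℝ) ≤ x} /
      (Fintype.card Γ : ℝ) ^ n := by
  have hpos : (0 : ℝ) < Fintype.card Γ := by exact_mod_cast two_pos.trans_le hΓ
  set bad : ℕ := #{S : Fin n → Γ | x < (n - per (List.ofFn S) : ℕ)}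
  set good : ℕ := #{S : Fin n → Γ | ((n - per (List.ofFn S) : ℕ) : ℝ) ≤ x}
  have htotal : good + bad = Fintype.card Γ ^ n := by
    have hsplit := card_filter_add_card_filter_not (s := (univ : Finset (Fin n → Γ)))
      fun S => ((n - per (List.ofFn S) : ℕ) : ℝ) ≤ x
    simpa only [not_le, card_univ, Fintype.card_fun, Fintype.card_fin] using hsplit
  have htotal_real : (good + bad : ℝ) = (Fintype.card Γ : ℝ) ^ n := by exact_mod_cast htotal
  have hbad : bad * (2 / δ) ≤ 2 * (Fintype.card Γ : ℝ) ^ n :=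
    (mul_le_mul_of_nonneg_left hxδ bad.cast_nonneg).trans (card_lt_sub_per_mul_rpow_le hΓ n hx)
  rw [← mul_div_assoc, div_le_iff₀ hδ] at hbad
  rw [le_div_iff₀ (pow_pos hpos n)]
  linarith

end Counting

theorem two_div_le_rpow_of_one_add_logb_le {b x δ : ℝ} (hb : 2 ≤ b) (hδ : 0 < δ)
    (hx : 1 + Real.logb b (1 / δ) ≤ x) : 2 / δ ≤ b ^ x := by
  have hpos : 0 < b := two_pos.trans_le hb
  calc 2 / δ = 2 * (1 / δ) := by ring
    _ ≤ b * (1 / δ) := by gcongr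
    _ = b ^ (1 + Real.logb b (1 / δ)) := by
        rw [Real.rpow_add hpos, Real.rpow_one, Real.rpow_logb hpos (by linarith) (by positivity)]
    _ ≤ b ^ x := Real.rpow_le_rpow_of_exponent_le (by linarith) hx

/-- there is an absolute constant `c > 0` such that for every alphabet of size
`σ ≥ 2` and every `n`, a uniformly random `S ∈ Σⁿ` satisfies `E[n - per(S)] ≤ c/σ`, and for every
`0 < δ ≤ 1`, with probability at least `1 - δ` one has `n - per(S) ≤ c·(1 + log_σ(1/δ))`. -/
theorem expected_and_whp_period : ∃ c : ℝ, 0 < c ∧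
    ∀ (σ : ℕ), 2 ≤ σ → ∀ (Γ : Type) [Fintype Γ], Fintype.card Γ = σ → ∀ n : ℕ,
      (∑ S : Fin n → Γ, ((n - per (List.ofFn S) : ℕ) : ℝ)) / (σ : ℝ) ^ n ≤ c / σ ∧
      ∀ δ : ℝ, 0 < δ → δ ≤ 1 →
        1 - δ ≤ (((univ.filter fun S : Fin n → Γ =>
            ((n - per (List.ofFn S) : ℕ) : ℝ) ≤ c * (1 + Real.logb σ (1 / δ))).card : ℝ)) /
          (σ : ℝ) ^ n := by
  refine ⟨4, four_pos, ?_⟩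
  rintro σ hσ Γ _ rfl n
  have hcard : (2 : ℝ) ≤ Fintype.card Γ := by exact_mod_cast hσ
  refine ⟨?_, fun δ hδ hδ1 => ?_⟩
  · rw [div_le_div_iff₀ (by positivity) (by positivity), mul_comm]
    exact_mod_cast card_mul_sum_sub_per_le hσ n
  · have hlog : 0 ≤ Real.logb (Fintype.card Γ) (1 / δ) :=
      Real.logb_nonneg (by linarith) (one_le_one_div hδ hδ1)
    exact one_sub_le_card_sub_per_le_div hσ n (by positivity) hδ
      (two_div_le_rpow_of_one_add_logb_le hcard hδ (by linarith))
end
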